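/- Let r ≥ 2 and m ≥ 2 be integers. If a ∈ Π_∞^{(r)}, then 1 − (1 − a)/m^{r−1} ∈ Π_∞^{(r)}. -/

import Mathlib

/-!
Let `𝓕` have Turán density `a`, and put `f n = ex(n, 𝓕)` and `g n = C(n, r) - f n`. Consider the
`r`-graphs whose vertex set can be coloured with `m` colours so that each monochromatic set `S`
spans at most `f |S|` edges (`IsSplit`). This class is closed under subgraphs
(`IsSplit.of_contains`), so it is the class of `𝓕'`-free graphs, where `𝓕'` is the family of all
`r`-graphs outside the class (`nonSplitFamily`, `mem_exSet_nonSplit`).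

A graph in the class whose colour classes have sizes `n₁, …, n_m` misses at least `∑ g (nᵢ)` of the
`r`-sets (`split_upper`). Taking all non-monochromatic `r`-sets and an `𝓕`-extremal graph inside
each colour class attains this number (`split_lower`). Hence
`C(n, r) - ex(n, 𝓕') = min ∑ g (nᵢ)` over `n₁ + ⋯ + n_m = n`. Since `g k ∼ (1 - a) k ^ r / r!`, the
power mean inequality shows that balanced partitions are asymptotically optimal, and the minimum is
asymptotic to `(1 - a) / m ^ (r - 1) · n ^ r / r!` (`tendsto_min_split`). Therefore `𝓕'` has Turán
density `1 - (1 - a) / m ^ (r - 1)`.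
-/

open Filter Topology

noncomputable section

/-- The Lagrange polynomial `λ_𝓔` of a family `E` of `r`-multisets on the index type `ι`:
`λ_𝓔(x) = r! · ∑_{E ∈ 𝓔} ∏_i x_i^{E(i)} / E(i)!`. -/
def lagrangePoly {ι : Type} [Fintype ι] [DecidableEq ι]
    (r : ℕ) (E : Finset (Multiset ι)) (x : ι → ℝ) : ℝ :=
  (Nat.factorial r : ℝ) *
    ∑ e ∈ E, ∏ i, x i ^ (Multiset.count i e) / ((Multiset.count i e).factorial : ℝ)

/-- The Lagrangian `λ(P)` of a pattern `P = (ι, E)`: the maximum of the Lagrange polynomial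
over the standard simplex. -/
def patternLagrangian {ι : Type} [Fintype ι] [DecidableEq ι]
    (r : ℕ) (E : Finset (Multiset ι)) : ℝ :=
  sSup (lagrangePoly r E '' stdSimplex ℝ ι)

/-- The family `𝓔[S]` of the induced subpattern `P[S]`, consisting of those multisets of `E`
all of whose elements lie in `S`, relabelled as multisets on the subtype `{i // i ∈ S}`. -/
def subFamily {ι : Type} [DecidableEq ι] (E : Finset (Multiset ι)) (S : Finset ι) :
    Finset (Multiset {i : ι // i ∈ S}) := by
  classical
  exact (E.filter (fun e => ∀ i ∈ e, i ∈ S)).image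
    (fun e => Multiset.filterMap
      (fun i => if h : i ∈ S then some (⟨i, h⟩ : {i : ι // i ∈ S}) else none) e)

/-- A pattern is minimal if removing any index strictly decreases the Lagrangian.
(`P - i` is exactly the induced subpattern on `univ.erase i`.) -/
def IsMinimalPattern {ι : Type} [Fintype ι] [DecidableEq ι] (r : ℕ)
    (E : Finset (Multiset ι)) : Prop :=
  ∀ i : ι, patternLagrangian r (subFamily E (Finset.univ.erase i)) < patternLagrangian r E

/-- Index set of the union `P₁ ⊕_i P₂`: index `i` of `ι₁` is replaced by a copy of `ι₂`. -/
abbrev unionIndex (ι₁ ι₂ : Type) (i : ι₁) : Type := {j : ι₁ // j ≠ i} ⊕ ι₂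

/-- Projection of the union index set back to `ι₁` (collapsing the copy of `ι₂` to `i`). -/
def unionProj {ι₁ ι₂ : Type} (i : ι₁) : unionIndex ι₁ ι₂ i → ι₁ :=
  Sum.elim (fun j => j.1) (fun _ => i)

/-- The family `𝓔̂` of the union `P₁ ⊕_i P₂`: an `r`-multiset on the new index set belongs to
`𝓔̂` iff its projection to `ι₁` belongs to `E₁` (cases (b),(c)), or it is a copy of a member
of `E₂` lying inside the copy of `ι₂` (case (a)). -/
def unionFamily {ι₁ ι₂ : Type} [Fintype ι₁] [Fintype ι₂] [DecidableEq ι₁] [DecidableEq ι₂]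
    (r : ℕ) (E₁ : Finset (Multiset ι₁)) (E₂ : Finset (Multiset ι₂)) (i : ι₁) :
    Finset (Multiset (unionIndex ι₁ ι₂ i)) := by
  classical
  exact Finset.image (fun R : Sym (unionIndex ι₁ ι₂ i) r => (R : Multiset (unionIndex ι₁ ι₂ i)))
    ((Finset.univ.sym r).filter
      (fun R : Sym (unionIndex ι₁ ι₂ i) r =>
        Multiset.map (unionProj i) (R : Multiset (unionIndex ι₁ ι₂ i)) ∈ E₁ ∨
        ∃ e ∈ E₂, (R : Multiset (unionIndex ι₁ ι₂ i)) = Multiset.map Sum.inr e))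

/-- Index set of the union `P₁ ⊕_T P₂`: each index of `T` is replaced by a copy of `ι₂`. -/
abbrev unionIndexT (ι₁ ι₂ : Type) (T : Finset ι₁) : Type :=
  {j : ι₁ // j ∉ T} ⊕ ({j : ι₁ // j ∈ T} × ι₂)

/-- Projection of the union index set back to `ι₁`. -/
def unionProjT {ι₁ ι₂ : Type} (T : Finset ι₁) : unionIndexT ι₁ ι₂ T → ι₁ :=
  Sum.elim (fun j => j.1) (fun p => p.1.1)

/-- The family `𝓔̂` of the union `P₁ ⊕_T P₂`. -/
def unionFamilyT {ι₁ ι₂ : Type} [Fintype ι₁] [Fintype ι₂] [DecidableEq ι₁] [DecidableEq ι₂]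
    (r : ℕ) (E₁ : Finset (Multiset ι₁)) (E₂ : Finset (Multiset ι₂)) (T : Finset ι₁) :
    Finset (Multiset (unionIndexT ι₁ ι₂ T)) := by
  classical
  exact Finset.image (fun R : Sym (unionIndexT ι₁ ι₂ T) r => (R : Multiset (unionIndexT ι₁ ι₂ T)))
    ((Finset.univ.sym r).filter
      (fun R : Sym (unionIndexT ι₁ ι₂ T) r =>
        Multiset.map (unionProjT T) (R : Multiset (unionIndexT ι₁ ι₂ T)) ∈ E₁ ∨
        ∃ i : {j : ι₁ // j ∈ T}, ∃ e ∈ E₂,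
          (R : Multiset (unionIndexT ι₁ ι₂ T)) = Multiset.map (fun k => Sum.inr (i, k)) e))

/-- The pattern `P_G` associated with an `r`-graph `G`: its multisets are the edges of `G`. -/
def graphPattern {V : Type} [DecidableEq V] (G : Finset (Finset V)) : Finset (Multiset V) :=
  G.image Finset.val

/-- The Lagrangian `λ(G)` of an `r`-graph `G`. -/
def graphLagrangian {V : Type} [Fintype V] [DecidableEq V] (r : ℕ) (G : Finset (Finset V)) : ℝ :=
  patternLagrangian r (graphPattern G)

/-- `α` is a jump for `r`. -/
def IsJump (r : ℕ) (α : ℝ) : Prop :=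
  ∃ c : ℝ, 0 < c ∧ ∀ ε : ℝ, 0 < ε → ∀ m : ℕ, r ≤ m → ∃ n₀ : ℕ, ∀ n : ℕ, n₀ ≤ n →
    ∀ G : Finset (Finset (Fin n)), (∀ e ∈ G, e.card = r) →
      α + ε ≤ (G.card : ℝ) / (n.choose r : ℝ) →
      ∃ W : Finset (Fin n), W.card = m ∧ ∃ H ⊆ G, (∀ e ∈ H, e ⊆ W) ∧
        α + c ≤ (H.card : ℝ) / (m.choose r : ℝ)

/-- `G` contains a copy of `F` as a subgraph. -/
def GraphContains {n k : ℕ} (G : Finset (Finset (Fin n))) (F : Finset (Finset (Fin k))) : Prop :=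
  ∃ φ : Fin k → Fin n, Function.Injective φ ∧ ∀ e ∈ F, e.image φ ∈ G

/-- The Turán number `ex(n, 𝓕)` for a family `𝓕` of graphs, among `r`-uniform hosts. -/
def exNum (r n : ℕ) (𝓕 : Set (Σ k : ℕ, Finset (Finset (Fin k)))) : ℕ :=
  sSup {c : ℕ | ∃ G : Finset (Finset (Fin n)), (∀ e ∈ G, e.card = r) ∧
    (∀ F ∈ 𝓕, ¬ GraphContains G F.2) ∧ G.card = c}

/-- `Π_∞^{(r)}`: the set of Turán densities of (possibly infinite) families of `r`-graphs. -/
def turanDensitySet (r : ℕ) : Set ℝ :=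
  {x | ∃ 𝓕 : Set (Σ k : ℕ, Finset (Finset (Fin k))),
    (∀ F ∈ 𝓕, ∀ e ∈ F.2, e.card = r) ∧
    Tendsto (fun n => (exNum r n 𝓕 : ℝ) / (n.choose r : ℝ)) atTop (nhds x)}

/-- `Λ^{(r)}`: the set of Lagrangians of `r`-graphs. -/
def lambdaSet (r : ℕ) : Set ℝ :=
  {x | ∃ (n : ℕ) (G : Finset (Finset (Fin n))), (∀ e ∈ G, e.card = r) ∧ graphLagrangian r G = x}

/-- The tail `(P_t)_{t ≥ t₀}` of a sequence of patterns is a `(k, l)`-sequence. -/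
def IsKLambdaSeqFrom (r k t₀ : ℕ) (l : ℝ) (ι : ℕ → Type)
    [∀ t, Fintype (ι t)] [∀ t, DecidableEq (ι t)]
    (𝓔 : ∀ t, Finset (Multiset (ι t))) : Prop :=
  ∃ ε : ℕ → ℝ,
    (∀ t, t₀ ≤ t → 0 < ε t) ∧
    Tendsto (fun t => patternLagrangian r (𝓔 t)) atTop (nhds l) ∧
    (∀ t, t₀ ≤ t → l + ε t ≤ patternLagrangian r (𝓔 t)) ∧
    (∀ t, t₀ ≤ t → ∀ S : Finset (ι t), S.card = k →
      patternLagrangian r (subFamily (𝓔 t) S) ≤ l)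

/-- A `(k, l)`-sequence of patterns. -/
def IsKLambdaSeq (r k : ℕ) (l : ℝ) (ι : ℕ → Type)
    [∀ t, Fintype (ι t)] [∀ t, DecidableEq (ι t)]
    (𝓔 : ∀ t, Finset (Multiset (ι t))) : Prop :=
  IsKLambdaSeqFrom r k 0 l ι 𝓔

/-- A non-jump sequence of patterns on `l`: for every `k > 0` some tail is a
`(k, l)`-sequence. -/
def IsNonJumpSeq (r : ℕ) (l : ℝ) (ι : ℕ → Type)
    [∀ t, Fintype (ι t)] [∀ t, DecidableEq (ι t)]
    (𝓔 : ∀ t, Finset (Multiset (ι t))) : Prop :=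
  ∀ k : ℕ, 0 < k → ∃ t₀ : ℕ, IsKLambdaSeqFrom r k t₀ l ι 𝓔

/-- The family of all `r`-multisets on `Fin m` except the `m` constant ones. -/
def allButConstant (m r : ℕ) : Finset (Multiset (Fin m)) := by
  classical
  exact ((Finset.univ.sym r).image (fun s : Sym (Fin m) r => (s : Multiset (Fin m)))).filter
    (fun e => ¬ ∃ i : Fin m, e = Multiset.replicate r i)

end

/-! ### Split graphs -/

/-- `G` is split (into `m` parts, with respect to `f`) if its vertices can be coloured with `m`
colours so that every monochromatic vertex set `S` spans at most `f |S|` edges of `G`. No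
condition is put on the edges that meet several colour classes. -/
def IsSplit (m : ℕ) (f : ℕ → ℕ) {n : ℕ} (G : Finset (Finset (Fin n))) : Prop :=
  ∃ c : Fin n → Fin m, ∀ i, ∀ S : Finset (Fin n), (∀ v ∈ S, c v = i) →
    (G.filter (· ⊆ S)).card ≤ f S.card

/-- The `r`-graphs that are not split; forbidding them leaves exactly the split graphs. -/
def nonSplitFamily (r m : ℕ) (f : ℕ → ℕ) : Set (Σ k : ℕ, Finset (Finset (Fin k))) :=
  {F | (∀ e ∈ F.2, e.card = r) ∧ ¬ IsSplit m f F.2}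

/-- The numbers of edges of the `𝓕`-free `r`-graphs on `n` vertices; `exNum` is its supremum. -/
def exSet (r n : ℕ) (𝓕 : Set (Σ k : ℕ, Finset (Finset (Fin k)))) : Set ℕ :=
  {c : ℕ | ∃ G : Finset (Finset (Fin n)), (∀ e ∈ G, e.card = r) ∧
    (∀ F ∈ 𝓕, ¬ GraphContains G F.2) ∧ G.card = c}

lemma exNum_eq (r n : ℕ) (𝓕) : exNum r n 𝓕 = sSup (exSet r n 𝓕) := rfl

lemma uniform_card_le {r n : ℕ} {G : Finset (Finset (Fin n))} (h : ∀ e ∈ G, e.card = r) :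
    G.card ≤ n.choose r := by
  have : G ⊆ Finset.powersetCard r Finset.univ := fun e he =>
    Finset.mem_powersetCard.2 ⟨Finset.subset_univ _, h e he⟩
  simpa using Finset.card_le_card this

lemma exSet_bdd (r n : ℕ) (𝓕) : BddAbove (exSet r n 𝓕) := by
  refine ⟨n.choose r, ?_⟩
  rintro c ⟨G, h, -, rfl⟩
  exact uniform_card_le h

lemma exNum_le (r n : ℕ) (𝓕) : exNum r n 𝓕 ≤ n.choose r := by
  rw [exNum_eq]
  rcases (exSet r n 𝓕).eq_empty_or_nonempty with h | h
  · simp [h]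
  · obtain ⟨G, h, -, h'⟩ := Nat.sSup_mem h (exSet_bdd r n 𝓕)
    rw [← h']
    exact uniform_card_le h

/-- Some `r`-graph on `n` vertices has `ex(n, 𝓕)` edges and at most `ex(|S|, 𝓕)` edges inside every
vertex set `S`. If no graph on `n` vertices is `𝓕`-free (which happens when `𝓕` contains an edgeless
graph), then `exNum r n 𝓕` is the junk value `0` and the empty graph has these properties. -/
lemma exists_extremal (r n : ℕ) (𝓕) : ∃ G : Finset (Finset (Fin n)), (∀ e ∈ G, e.card = r) ∧
    G.card = exNum r n 𝓕 ∧ ∀ S : Finset (Fin n), (G.filter (· ⊆ S)).card ≤ exNum r S.card 𝓕 := by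
  classical
  rcases (exSet r n 𝓕).eq_empty_or_nonempty with h | h
  · refine ⟨∅, by simp, ?_, by simp⟩
    rw [exNum_eq, h]; simp
  obtain ⟨G, hG, hF, hc⟩ := Nat.sSup_mem h (exSet_bdd r n 𝓕)
  refine ⟨G, hG, hc, fun S => ?_⟩
  set φ := S.orderEmbOfFin rfl with hφ
  have hinj : Function.Injective φ := φ.injective
  let G' : Finset (Finset (Fin S.card)) := Finset.univ.filter (fun e => e.image φ ∈ G)
  have hle : (G.filter (· ⊆ S)).card ≤ G'.card := by
    have : G.filter (· ⊆ S) ⊆ G'.image (fun e => e.image φ) := by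
      intro e he
      rw [Finset.mem_filter] at he
      have hr : (e.preimage φ hinj.injOn).image φ = e := by
        rw [Finset.image_preimage, Finset.filter_true_of_mem]
        intro x hx
        rw [hφ, Finset.range_orderEmbOfFin]
        exact he.2 hx
      exact Finset.mem_image.2 ⟨_, by simp [G', hr, he.1], hr⟩
    exact (Finset.card_le_card this).trans Finset.card_image_le
  refine hle.trans (le_csSup (exSet_bdd r _ 𝓕) ⟨G', ?_, ?_, rfl⟩)
  · intro e he
    rw [← Finset.card_image_of_injective e hinj]
    exact hG _ (by simpa [G'] using he)
  · rintro F hFm ⟨ψ, hψ, hm⟩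
    refine hF F hFm ⟨φ ∘ ψ, hinj.comp hψ, fun e he => ?_⟩
    have := hm e he
    simpa [G', Finset.image_image] using this

/-- Being split passes to subgraphs, by pulling the colouring back. -/
lemma IsSplit.of_contains {m : ℕ} {f : ℕ → ℕ} {n k : ℕ} {G : Finset (Finset (Fin n))}
    {F : Finset (Finset (Fin k))} (hG : IsSplit m f G) (h : GraphContains G F) :
    IsSplit m f F := by
  classical
  obtain ⟨c, hc⟩ := hG
  obtain ⟨φ, hφ, hF⟩ := h
  refine ⟨c ∘ φ, fun i S hS => ?_⟩
  have := hc i (S.image φ) (by simpa using hS)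
  rw [Finset.card_image_of_injective _ hφ] at this
  refine le_trans ?_ this
  refine Finset.card_le_card_of_injOn (fun e => e.image φ) ?_
    (Finset.image_injective hφ).injOn
  intro e he
  simp only [Finset.coe_filter, Set.mem_ofPred_eq] at he ⊢
  exact ⟨hF e he.1, Finset.image_subset_image he.2⟩

lemma mem_exSet_nonSplit {r m n : ℕ} {f : ℕ → ℕ} {N : ℕ} :
    N ∈ exSet r n (nonSplitFamily r m f) ↔
      ∃ G : Finset (Finset (Fin n)), (∀ e ∈ G, e.card = r) ∧ IsSplit m f G ∧ G.card = N := by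
  constructor
  · rintro ⟨G, hG, hF, hc⟩
    refine ⟨G, hG, ?_, hc⟩
    by_contra hs
    exact hF ⟨n, G⟩ ⟨hG, hs⟩ ⟨id, Function.injective_id, by simp⟩
  · rintro ⟨G, hG, hs, hc⟩
    exact ⟨G, hG, fun F hF h => hF.2 (hs.of_contains h), hc⟩

/-- The number of vertices of colour `i`. -/
def colourCard {n m : ℕ} (c : Fin n → Fin m) (i : Fin m) : ℕ :=
  (Finset.univ.filter (fun v => c v = i)).card

lemma sum_colourCard {n m : ℕ} (c : Fin n → Fin m) : ∑ i, colourCard c i = n := by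
  have := Finset.card_eq_sum_card_fiberwise (f := c) (s := Finset.univ) (t := Finset.univ)
    (by simp)
  simpa [colourCard] using this.symm

/-- The `r`-sets missing from a split graph include, for each colour class, those missing inside
that class; these are disjoint for different classes because `r > 0`. -/
lemma split_upper {r m n : ℕ} (hr : 0 < r) {f : ℕ → ℕ} {G : Finset (Finset (Fin n))}
    (hG : ∀ e ∈ G, e.card = r) (hs : IsSplit m f G) :
    ∃ c : Fin n → Fin m,
      G.card + ∑ i, ((colourCard c i).choose r - f (colourCard c i)) ≤ n.choose r := by
  classical
  obtain ⟨c, hc⟩ := hs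
  refine ⟨c, ?_⟩
  let V : Fin m → Finset (Fin n) := fun i => Finset.univ.filter (fun v => c v = i)
  let B : Fin m → Finset (Finset (Fin n)) := fun i => Finset.powersetCard r (V i) \ G
  have hB : ∀ i, (colourCard c i).choose r - f (colourCard c i) ≤ (B i).card := by
    intro i
    have h1 := hc i (V i) (by simp [V])
    have h2 : (B i).card = (V i).card.choose r - (G ∩ Finset.powersetCard r (V i)).card := by
      rw [Finset.card_sdiff, Finset.card_powersetCard]
    have h3 : (G ∩ Finset.powersetCard r (V i)).card ≤ (G.filter (· ⊆ V i)).card := by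
      refine Finset.card_le_card fun e he => ?_
      simp only [Finset.mem_inter, Finset.mem_powersetCard] at he
      simp [he.1, he.2.1]
    have : colourCard c i = (V i).card := rfl
    rw [this, h2]
    omega
  have hdisj : ∀ i ∈ Finset.univ, ∀ j ∈ Finset.univ, i ≠ j → Disjoint (B i) (B j) := by
    intro i _ j _ hij
    rw [Finset.disjoint_left]
    intro e hi hj
    simp only [B, Finset.mem_sdiff, Finset.mem_powersetCard] at hi hj
    obtain ⟨v, hv⟩ := Finset.card_pos.1 (hi.1.2 ▸ hr)
    have h1 := hi.1.1 hv
    have h2 := hj.1.1 hv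
    simp only [V, Finset.mem_filter] at h1 h2
    exact hij (h1.2.symm.trans h2.2)
  have hU : Disjoint G (Finset.univ.biUnion B) := by
    rw [Finset.disjoint_left]
    intro e he h
    simp [B, he] at h
  calc G.card + ∑ i, ((colourCard c i).choose r - f (colourCard c i))
      ≤ G.card + ∑ i, (B i).card := by gcongr with i; exact hB i
    _ = (G ∪ Finset.univ.biUnion B).card := by
      rw [Finset.card_union_of_disjoint hU, Finset.card_biUnion hdisj]
    _ ≤ n.choose r := by
      refine uniform_card_le fun e he => ?_
      simp only [Finset.mem_union, Finset.mem_biUnion, B, Finset.mem_sdiff,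
        Finset.mem_powersetCard] at he
      rcases he with he | ⟨i, -, he⟩
      · exact hG e he
      · exact he.1.2

/-- For every colouring, the graph consisting of all non-monochromatic `r`-sets together with an
`𝓕`-extremal graph on each colour class is split. -/
lemma split_lower (r : ℕ) {m n : ℕ} (𝓕) (c : Fin n → Fin m) :
    ∃ G : Finset (Finset (Fin n)), (∀ e ∈ G, e.card = r) ∧
      IsSplit m (fun k => exNum r k 𝓕) G ∧
      n.choose r ≤ G.card +
        ∑ i, ((colourCard c i).choose r - exNum r (colourCard c i) 𝓕) := by
  classical
  let V : Fin m → Finset (Fin n) := fun i => Finset.univ.filter (fun v => c v = i)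
  have hV : ∀ i, colourCard c i = (V i).card := fun i => rfl
  choose H hHr hHc hHS using fun i => exists_extremal r (V i).card 𝓕
  let φ : ∀ i, Fin (V i).card ↪o Fin n := fun i => (V i).orderEmbOfFin rfl
  let K : Fin m → Finset (Finset (Fin n)) := fun i => (H i).image (fun e => e.image (φ i))
  have hKc : ∀ i, (K i).card = exNum r (V i).card 𝓕 := by
    intro i
    rw [← hHc i]
    exact Finset.card_image_of_injective _ (Finset.image_injective (φ i).injective)
  have hKs : ∀ i, K i ⊆ Finset.powersetCard r (V i) := by
    intro i e he
    obtain ⟨e', he', rfl⟩ := Finset.mem_image.1 he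
    rw [Finset.mem_powersetCard, Finset.card_image_of_injective _ (φ i).injective]
    refine ⟨?_, hHr i e' he'⟩
    intro v hv
    obtain ⟨w, -, rfl⟩ := Finset.mem_image.1 hv
    exact Finset.orderEmbOfFin_mem _ _ _
  let G : Finset (Finset (Fin n)) :=
    (Finset.powersetCard r Finset.univ).filter (fun e => ∀ i, e ⊆ V i → e ∈ K i)
  refine ⟨G, ?_, ⟨c, ?_⟩, ?_⟩
  · intro e he
    exact (Finset.mem_powersetCard.1 (Finset.mem_filter.1 he).1).2
  · intro i S hS
    have hSV : S ⊆ V i := fun v hv => by simp [V, hS v hv]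
    have himg : (S.preimage (φ i) (φ i).injective.injOn).image (φ i) = S := by
      rw [Finset.image_preimage, Finset.filter_true_of_mem]
      intro x hx
      simp only [φ]
      rw [Finset.range_orderEmbOfFin]
      exact hSV hx
    have hcard : (S.preimage (φ i) (φ i).injective.injOn).card = S.card := by
      rw [← Finset.card_image_of_injective _ (φ i).injective, himg]
    have h := hHS i (S.preimage (φ i) (φ i).injective.injOn)
    rw [hcard] at h
    refine le_trans ?_ h
    have hsub : G.filter (· ⊆ S) ⊆
        ((H i).filter (· ⊆ S.preimage (φ i) (φ i).injective.injOn)).image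
          (fun e => e.image (φ i)) := by
      intro e he
      rw [Finset.mem_filter] at he
      obtain ⟨e', he', rfl⟩ := Finset.mem_image.1
        ((Finset.mem_filter.1 he.1).2 i (he.2.trans hSV))
      refine Finset.mem_image.2 ⟨e', Finset.mem_filter.2 ⟨he', ?_⟩, rfl⟩
      intro w hw
      exact Finset.mem_preimage.2 (he.2 (Finset.mem_image_of_mem _ hw))
    exact (Finset.card_le_card hsub).trans Finset.card_image_le
  · have hcov : Finset.powersetCard r Finset.univ ⊆
        G ∪ Finset.univ.biUnion (fun i => Finset.powersetCard r (V i) \ K i) := by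
      intro e he
      by_cases hG : e ∈ G
      · exact Finset.mem_union_left _ hG
      · refine Finset.mem_union_right _ ?_
        have : ∃ i, e ⊆ V i ∧ e ∉ K i := by
          by_contra! hcon
          exact hG (Finset.mem_filter.2 ⟨he, hcon⟩)
        obtain ⟨i, h1, h2⟩ := this
        refine Finset.mem_biUnion.2 ⟨i, Finset.mem_univ _, Finset.mem_sdiff.2 ⟨?_, h2⟩⟩
        exact Finset.mem_powersetCard.2 ⟨h1, (Finset.mem_powersetCard.1 he).2⟩
    have h1 := Finset.card_le_card hcov
    rw [Finset.card_powersetCard, Finset.card_univ, Fintype.card_fin] at h1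
    refine h1.trans ((Finset.card_union_le _ _).trans ?_)
    gcongr
    refine Finset.card_biUnion_le.trans (Finset.sum_le_sum fun i _ => ?_)
    rw [Finset.card_sdiff_of_subset (hKs i), hKc, Finset.card_powersetCard, hV]

/-! ### Asymptotics of the optimal partition -/

lemma exists_balanced {m : ℕ} (hm : 0 < m) (n : ℕ) :
    ∃ c : Fin n → Fin m, ∀ i, colourCard c i = n / m + if (i : ℕ) < n % m then 1 else 0 := by
  refine ⟨fun v => ⟨v % m, Nat.mod_lt _ hm⟩, fun i => ?_⟩
  have h := Nat.count_modEq_card n hm (i : ℕ)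
  rw [Nat.mod_eq_of_lt i.2] at h
  rw [← h, Nat.count_eq_card_filter_range, colourCard]
  refine Finset.card_bij (fun v _ => (v : ℕ)) ?_ ?_ ?_
  · intro v hv
    simp only [Finset.mem_filter, Finset.mem_univ, true_and, Fin.ext_iff] at hv
    simp [Nat.ModEq, hv, Nat.mod_eq_of_lt i.2]
  · intro v _ w _ h
    exact Fin.ext h
  · intro b hb
    simp only [Finset.mem_filter, Finset.mem_range, Nat.ModEq, Nat.mod_eq_of_lt i.2] at hb
    exact ⟨⟨b, hb.1⟩, by simp [Fin.ext_iff, hb.2], rfl⟩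

/-- The hypotheses `hA` and `hB` say that `D n` is the minimum of `∑ i, g (nᵢ)` over the partitions
`n = n₁ + ⋯ + n_m`. If `g k ∼ β k ^ r`, then balanced partitions are asymptotically optimal by
the power mean inequality, so that `D n ∼ m · β (n / m) ^ r`. -/
lemma tendsto_min_split {r m : ℕ} (hr : 2 ≤ r) (hm : 2 ≤ m) {g D : ℕ → ℕ} {β : ℝ}
    (hg : Tendsto (fun k => (g k : ℝ) / (k : ℝ) ^ r) atTop (𝓝 β))
    (hA : ∀ n, ∃ c : Fin n → Fin m, ∑ i, g (colourCard c i) ≤ D n)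
    (hB : ∀ n, ∀ c : Fin n → Fin m, D n ≤ ∑ i, g (colourCard c i)) :
    Tendsto (fun n => (D n : ℝ) / (n : ℝ) ^ r) atTop (𝓝 (β / (m : ℝ) ^ (r - 1))) := by
  have hm0 : (0 : ℝ) < m := by positivity
  have hβ : 0 ≤ β := ge_of_tendsto' hg fun k => by positivity
  obtain ⟨s, rfl⟩ : ∃ s, r = s + 1 := ⟨r - 1, by omega⟩
  simp only [Nat.add_sub_cancel]
  refine tendsto_order.2 ⟨fun l hl => ?_, fun u hu => ?_⟩
  · set L := β / (m : ℝ) ^ s with hL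
    -- the error `ε` is small enough that `m` classes cost at most half of the gap `L - l`
    set ε := (L - l) / (2 * m) with hε
    have hε0 : 0 < ε := by have := sub_pos.2 hl; positivity
    obtain ⟨N, hN⟩ := eventually_atTop.1 (hg.eventually_const_lt (sub_lt_self β hε0))
    set K := β * (N : ℝ) ^ (s + 1) with hK
    have hK0 : 0 ≤ K := by positivity
    -- `K` absorbs the values `k < N`, where only `0 ≤ g k` is known
    have hgk : ∀ k : ℕ, β * (k : ℝ) ^ (s + 1) - ε * (k : ℝ) ^ (s + 1) - K ≤ g k := by
      intro k
      rcases Nat.eq_zero_or_pos k with rfl | hk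
      · simp only [Nat.cast_zero, ne_eq, Nat.add_eq_zero_iff, one_ne_zero, and_false,
          not_false_eq_true, zero_pow, mul_zero]
        have : (0 : ℝ) ≤ g 0 := by positivity
        linarith
      have hk' : (0 : ℝ) < k := by exact_mod_cast hk
      rcases le_total N k with h | h
      · have := hN k h
        rw [lt_div_iff₀ (by positivity)] at this
        linarith
      · have h1 : (k : ℝ) ^ (s + 1) ≤ (N : ℝ) ^ (s + 1) := by gcongr
        have h2 := mul_le_mul_of_nonneg_left h1 hβ
        have h3 : 0 ≤ ε * (k : ℝ) ^ (s + 1) := by positivity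
        have : (0 : ℝ) ≤ g k := by positivity
        linarith
    have hlow : ∀ n : ℕ, L * (n : ℝ) ^ (s + 1) - m * ε * (n : ℝ) ^ (s + 1) - m * K ≤ D n := by
      intro n
      obtain ⟨c, hc⟩ := hA n
      have hsum : ∑ i, (colourCard c i : ℝ) = n := by exact_mod_cast sum_colourCard c
      have hpm := pow_sum_div_card_le_sum_pow (s := Finset.univ)
        (f := fun i => (colourCard c i : ℝ)) (fun i _ => by positivity) s
      rw [hsum, Finset.card_univ, Fintype.card_fin] at hpm
      have hle : ∀ i, (colourCard c i : ℝ) ^ (s + 1) ≤ (n : ℝ) ^ (s + 1) := by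
        intro i
        have : colourCard c i ≤ n := by
          exact (Finset.single_le_sum (f := colourCard c) (fun _ _ => Nat.zero_le _)
            (Finset.mem_univ i)).trans_eq (sum_colourCard c)
        gcongr
      have h1 : (∑ i, (g (colourCard c i) : ℝ)) ≤ D n := by exact_mod_cast hc
      have h2 : ∑ i, (β * (colourCard c i : ℝ) ^ (s + 1) - ε * (n : ℝ) ^ (s + 1) - K)
          ≤ ∑ i, (g (colourCard c i) : ℝ) := by
        refine Finset.sum_le_sum fun i _ => ?_
        have := mul_le_mul_of_nonneg_left (hle i) hε0.le
        have := hgk (colourCard c i)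
        linarith
      rw [Finset.sum_sub_distrib, Finset.sum_sub_distrib, ← Finset.mul_sum] at h2
      simp only [Finset.sum_const, Finset.card_univ, Fintype.card_fin, nsmul_eq_mul] at h2
      have h3 := mul_le_mul_of_nonneg_left hpm hβ
      have h4 : L * (n : ℝ) ^ (s + 1) = β * ((n : ℝ) ^ (s + 1) / (m : ℝ) ^ s) := by
        rw [hL]; ring
      linarith
    have hinf : Tendsto (fun n : ℕ => (n : ℝ) ^ (s + 1)) atTop atTop :=
      (tendsto_pow_atTop (Nat.succ_ne_zero s)).comp tendsto_natCast_atTop_atTop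
    filter_upwards [hinf.eventually_gt_atTop (m * K / ((L - l) / 2)), eventually_gt_atTop 0]
      with n hn hn0
    have hn0' : (0 : ℝ) < n := by exact_mod_cast hn0
    rw [lt_div_iff₀ (by positivity)]
    rw [div_lt_iff₀ (by linarith)] at hn
    have hmε : m * ε = (L - l) / 2 := by rw [hε]; field_simp
    have := hlow n
    rw [hmε] at this
    linarith
  · -- sizes of the classes of a balanced colouring
    let k : Fin m → ℕ → ℕ := fun i n => n / m + if (i : ℕ) < n % m then 1 else 0
    have hk : ∀ i, Tendsto (k i) atTop atTop := fun i =>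
      tendsto_atTop_mono (fun n => Nat.le_add_right _ _)
        (Nat.tendsto_div_const_atTop (by omega))
    have hkn : ∀ i, Tendsto (fun n : ℕ => (k i n : ℝ) / n) atTop (𝓝 (1 / m)) := by
      intro i
      have hinv : Tendsto (fun n : ℕ => 1 / (n : ℝ)) atTop (𝓝 0) :=
        tendsto_one_div_atTop_nhds_zero_nat
      refine tendsto_of_tendsto_of_tendsto_of_le_of_le'
        (g := fun n : ℕ => 1 / (m : ℝ) - 1 / (n : ℝ))
        (h := fun n : ℕ => 1 / (m : ℝ) + 1 / (n : ℝ)) (by simpa using hinv.const_sub (1 / (m : ℝ)))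
        (by simpa using hinv.const_add (1 / (m : ℝ))) ?_ ?_
      all_goals
        filter_upwards [eventually_gt_atTop 0] with n hn0
        have hn0' : (0 : ℝ) < n := by exact_mod_cast hn0
        have h1 : ((n / m : ℕ) : ℝ) ≤ n / m := Nat.cast_div_le
        have h2 : (n : ℝ) / m < (n / m : ℕ) + 1 := by
          rw [div_lt_iff₀ hm0]
          have := Nat.lt_div_mul_add (a := n) (b := m) (by omega)
          have h : n < (n / m + 1) * m := by rw [add_mul]; omega
          exact_mod_cast h
        have h3 : ((n / m : ℕ) : ℝ) ≤ k i n := by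
          exact_mod_cast Nat.le_add_right _ _
        have h4 : (k i n : ℝ) ≤ (n / m : ℕ) + 1 := by
          have : k i n ≤ n / m + 1 := by simp only [k]; split_ifs <;> omega
          exact_mod_cast this
      · rw [le_div_iff₀ hn0']
        have : (1 / (m : ℝ) - 1 / n) * n = n / m - 1 := by field_simp
        linarith
      · rw [div_le_iff₀ hn0']
        have : (1 / (m : ℝ) + 1 / n) * n = n / m + 1 := by field_simp
        linarith
    have hterm : ∀ i, Tendsto (fun n : ℕ => (g (k i n) : ℝ) / (n : ℝ) ^ (s + 1)) atTop
        (𝓝 (β * (1 / m) ^ (s + 1))) := by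
      intro i
      refine ((hg.comp (hk i)).mul ((hkn i).pow (s + 1))).congr' ?_
      filter_upwards [(hk i).eventually_gt_atTop 0] with n hn
      have : (0 : ℝ) < k i n := by exact_mod_cast hn
      simp only [Function.comp]
      rw [div_pow, div_mul_div_cancel₀ (by positivity)]
    have hU := tendsto_finsetSum Finset.univ (fun i _ => hterm i)
    have hlim : ∑ _i : Fin m, β * (1 / (m : ℝ)) ^ (s + 1) = β / (m : ℝ) ^ s := by
      rw [Finset.sum_const, Finset.card_univ, Fintype.card_fin, nsmul_eq_mul, one_div, inv_pow]
      field_simp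
      ring
    rw [hlim] at hU
    filter_upwards [hU.eventually_lt_const hu] with n hn
    refine lt_of_le_of_lt ?_ hn
    obtain ⟨c, hc⟩ := exists_balanced (m := m) (by omega) n
    have := hB n c
    rw [← Finset.sum_div]
    gcongr
    simp only [hc] at this
    exact_mod_cast this

lemma tendsto_pow_div_choose (r : ℕ) :
    Tendsto (fun n : ℕ => (n : ℝ) ^ r / (n.choose r : ℝ)) atTop (𝓝 (r.factorial : ℝ)) := by
  have hf : (r.factorial : ℝ) ≠ 0 := by exact_mod_cast r.factorial_ne_zero
  have h := (isEquivalent_choose r).symm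
  rw [Asymptotics.isEquivalent_iff_tendsto_one] at h
  · have := h.const_mul (r.factorial : ℝ)
    rw [mul_one] at this
    refine this.congr fun n => ?_
    simp only [Pi.div_apply]
    field_simp
  · filter_upwards [eventually_ge_atTop r] with n hn
    exact_mod_cast (Nat.choose_pos hn).ne'

/-- Edge density `1 - b` amounts to about `(b / r!) n ^ r` missing edges. -/
lemma tendsto_deficit_iff {r : ℕ} {f : ℕ → ℕ} (hf : ∀ n, f n ≤ n.choose r) {b : ℝ} :
    Tendsto (fun n => (f n : ℝ) / (n.choose r : ℝ)) atTop (𝓝 (1 - b)) ↔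
      Tendsto (fun n => ((n.choose r - f n : ℕ) : ℝ) / (n : ℝ) ^ r) atTop
        (𝓝 (b / r.factorial)) := by
  have hfac : (r.factorial : ℝ) ≠ 0 := by exact_mod_cast r.factorial_ne_zero
  have hP := tendsto_pow_div_choose r
  constructor
  · intro h
    have h1 := (h.const_sub 1).div hP hfac
    rw [sub_sub_cancel] at h1
    refine h1.congr' ?_
    filter_upwards [eventually_ge_atTop r, eventually_gt_atTop 0] with n hn hn0
    have hc : (0 : ℝ) < n.choose r := by exact_mod_cast Nat.choose_pos hn
    have hn0' : (0 : ℝ) < n := by exact_mod_cast hn0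
    rw [Nat.cast_sub (hf n), Pi.div_apply]
    field_simp
  · intro h
    have h1 := (h.mul hP).const_sub 1
    rw [div_mul_cancel₀ _ hfac] at h1
    refine h1.congr' ?_
    filter_upwards [eventually_ge_atTop r, eventually_gt_atTop 0] with n hn hn0
    have hc : (0 : ℝ) < n.choose r := by exact_mod_cast Nat.choose_pos hn
    have hn0' : (0 : ℝ) < n := by exact_mod_cast hn0
    rw [Nat.cast_sub (hf n)]
    field_simp
    ring

/-! ### The shift of Turán densities -/

/-- if `a ∈ Π_∞^{(r)}` then `1 − (1 − a)/m^{r−1} ∈ Π_∞^{(r)}`. -/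
theorem turanDensitySet_shift (r m : ℕ) (hr : 2 ≤ r) (hm : 2 ≤ m) (a : ℝ)
    (ha : a ∈ turanDensitySet r) :
    1 - (1 - a) / (m : ℝ) ^ (r - 1) ∈ turanDensitySet r := by
  obtain ⟨𝓕, -, hlim⟩ := ha
  set f : ℕ → ℕ := fun k => exNum r k 𝓕 with hf
  refine ⟨nonSplitFamily r m f, fun F hF => hF.1, ?_⟩
  rw [tendsto_deficit_iff fun n => exNum_le r n _, div_right_comm]
  rw [← sub_sub_cancel 1 a, tendsto_deficit_iff fun n => exNum_le r n _] at hlim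
  refine tendsto_min_split hr hm hlim (fun n => ?_) (fun n c => ?_)
  · -- an extremal graph for the new family is itself split
    have hne : (exSet r n (nonSplitFamily r m f)).Nonempty := by
      obtain ⟨G, hG, hs, -⟩ := split_lower r 𝓕 (fun _ : Fin n => (⟨0, by omega⟩ : Fin m))
      exact ⟨_, mem_exSet_nonSplit.2 ⟨G, hG, hs, rfl⟩⟩
    obtain ⟨G, hG, hs, hc⟩ := mem_exSet_nonSplit.1 (Nat.sSup_mem hne (exSet_bdd _ _ _))
    rw [← exNum_eq] at hc
    obtain ⟨c, hle⟩ := split_upper (by omega) hG hs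
    exact ⟨c, Nat.le_sub_of_add_le' (hc ▸ hle)⟩
  · obtain ⟨G, hG, hs, hle⟩ := split_lower r 𝓕 c
    have : G.card ≤ exNum r n (nonSplitFamily r m f) :=
      le_csSup (exSet_bdd _ _ _) (mem_exSet_nonSplit.2 ⟨G, hG, hs, rfl⟩)
    omega
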